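/- arXiv:1802.00338 — 3 statements merged into one kernel-verified Lean document; each statement's English description precedes it below -/
import Mathlib

section
/- Let λ ≥ 2 be a natural number and M > 0. The fiber of the energy–Casimir map over the point (M^{λ+1}·(√λ)^λ, (λ+1)M²/2), i.e. the set {(x, y, z) ∈ ℝ³ : x·y^λ = M^{λ+1}·(√λ)^λ and (1/2)(x² + y² + z²) = (λ+1)M²/2}, consists of exactly the two points (M, M√λ, 0) and ((−1)^λ·M, −M√λ, 0), and both points are equilibria of the rattleback system. -/
/-!
Write `m = M²`. On the fiber, `a = x²` and `b = y² / λ` satisfy `a * b ^ λ = m ^ (λ + 1)`, so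
their weighted geometric mean with weights `1 / (λ + 1)` and `λ / (λ + 1)` is `m`, while the
Casimir bounds their weighted arithmetic mean by `m`, with a deficit proportional to `z²`. The
equality case of the AM-GM inequality forces `x² = M²`, `y² = λ M²` and `z = 0`. All points of the
fiber are therefore equilibria, and the value of the energy decides which signs of `x` and `y`
occur.
-/

namespace Rattleback

theorem eq_of_le_geom_mean_of_arith_mean_le {ι : Type*} {s : Finset ι} {w z : ι → ℝ} {m : ℝ}
    (hw : ∀ i ∈ s, 0 ≤ w i) (hw_sum : ∑ i ∈ s, w i = 1) (hz : ∀ i ∈ s, 0 ≤ z i)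
    (hgeom : m ≤ ∏ i ∈ s, z i ^ w i) (harith : ∑ i ∈ s, w i * z i ≤ m)
    {i : ι} (hi : i ∈ s) (hwi : w i ≠ 0) : z i = m := by
  have amgm := Real.geom_mean_le_arith_mean_weighted s w z hw hw_sum hz
  have mean_eq : ∑ i ∈ s, w i * z i = m := harith.antisymm (hgeom.trans amgm)
  have equality := amgm.antisymm (harith.trans hgeom)
  rw [← mean_eq]
  exact (Real.geom_mean_eq_arith_mean_weighted_iff_of_nonneg' s w z hw hw_sum hz).mp
    equality i hi hwi

theorem rpow_mul_rpow_pow_succ {a b : ℝ} (n : ℕ) (ha : 0 ≤ a) (hb : 0 ≤ b) :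
    (a ^ (1 / (n + 1) : ℝ) * b ^ (n / (n + 1) : ℝ)) ^ (n + 1) = a * b ^ n := by
  have hn : (n + 1 : ℝ) ≠ 0 := by positivity
  rw [mul_pow, ← Real.rpow_mul_natCast ha, ← Real.rpow_mul_natCast hb, Nat.cast_add_one,
    div_mul_cancel₀ _ hn, div_mul_cancel₀ _ hn, Real.rpow_one, Real.rpow_natCast]

theorem eq_and_eq_of_pow_le_mul_pow_of_add_le {n : ℕ} {a b m : ℝ} (hn : n ≠ 0) (ha : 0 ≤ a)
    (hb : 0 ≤ b) (hprod : m ^ (n + 1) ≤ a * b ^ n) (hsum : a + n * b ≤ (n + 1) * m) :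
    a = m ∧ b = m := by
  have hgeom : m ≤ a ^ (1 / (n + 1) : ℝ) * b ^ (n / (n + 1) : ℝ) :=
    le_of_pow_le_pow_left₀ n.succ_ne_zero (by positivity)
      (hprod.trans_eq (rpow_mul_rpow_pow_succ n ha hb).symm)
  have harith : 1 / (n + 1) * a + n / (n + 1) * b ≤ m := by
    rw [div_mul_eq_mul_div, div_mul_eq_mul_div, ← add_div, div_le_iff₀ (by positivity)]
    linarith
  let w : Fin 2 → ℝ := ![1 / (n + 1), n / (n + 1)]
  have hw : ∀ i, 0 < w i := by
    simp only [Fin.forall_fin_two, w, Matrix.cons_val_zero, Matrix.cons_val_one]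
    constructor <;> positivity
  have hw_sum : ∑ i, w i = 1 := by
    simp only [Fin.sum_univ_two, w, Matrix.cons_val_zero, Matrix.cons_val_one]
    field_simp
    ring
  have mean_eq (i : Fin 2) : ![a, b] i = m :=
    eq_of_le_geom_mean_of_arith_mean_le (fun j _ ↦ (hw j).le) hw_sum
      (by simp [Fin.forall_fin_two, ha, hb]) (by simpa [w] using hgeom) (by simpa [w] using harith)
      (Finset.mem_univ i) (hw i).ne'
  exact ⟨mean_eq 0, mean_eq 1⟩

/-- The energy–Casimir map `(H, C)` of the rattleback system with parameter `lam`. -/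
noncomputable def energyCasimir (lam : ℕ) (v : ℝ × ℝ × ℝ) : ℝ × ℝ :=
  (v.1 * v.2.1 ^ lam, (1 / 2 : ℝ) * (v.1 ^ 2 + v.2.1 ^ 2 + v.2.2 ^ 2))

/-- The vector field `(ẋ, ẏ, ż)` of the rattleback system with parameter `lam`; its zeros are the
equilibria. -/
def vectorField (lam : ℕ) (v : ℝ × ℝ × ℝ) : ℝ × ℝ × ℝ :=
  (lam * v.1 * v.2.2, -(v.2.1 * v.2.2), v.2.1 ^ 2 - lam * v.1 ^ 2)

/-- The curve `σ` of energy–Casimir values whose fibers are determined, parametrized by `M`. -/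
noncomputable def sigma (lam : ℕ) (M : ℝ) : ℝ × ℝ :=
  (M ^ (lam + 1) * √lam ^ lam, (lam + 1) * M ^ 2 / 2)

section Fiber

variable {lam : ℕ} {M x y z : ℝ}

theorem energyCasimir_eq_sigma_iff :
    energyCasimir lam (x, y, z) = sigma lam M ↔
      x * y ^ lam = M * (M * √lam) ^ lam ∧ x ^ 2 + y ^ 2 + z ^ 2 = (lam + 1) * M ^ 2 := by
  have energy_eq : M ^ (lam + 1) * √lam ^ lam = M * (M * √lam) ^ lam := by
    rw [mul_pow, pow_succ']
    ring
  rw [energyCasimir, sigma, Prod.mk.injEq, energy_eq]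
  refine and_congr_right fun _ ↦ ⟨fun h ↦ ?_, fun h ↦ ?_⟩ <;> linarith

theorem sq_eq_of_energyCasimir_eq_sigma (h : energyCasimir lam (x, y, z) = sigma lam M) :
    x ^ 2 = M ^ 2 ∧ y ^ 2 = lam * M ^ 2 ∧ z = 0 := by
  obtain ⟨energy, casimir⟩ := energyCasimir_eq_sigma_iff.mp h
  suffices squares : x ^ 2 = M ^ 2 ∧ y ^ 2 = lam * M ^ 2 by
    obtain ⟨hx, hy⟩ := squares
    exact ⟨hx, hy, pow_eq_zero_iff two_ne_zero |>.mp (by linarith)⟩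
  rcases eq_or_ne lam 0 with rfl | hlam
  · obtain rfl : x = M := by simpa using energy
    refine ⟨rfl, ?_⟩
    simp only [Nat.cast_zero, zero_add, one_mul, zero_mul] at casimir ⊢
    linarith [sq_nonneg y, sq_nonneg z]
  have hlam_cast : (lam : ℝ) ≠ 0 := Nat.cast_ne_zero.mpr hlam
  have hprod : (M ^ 2) ^ (lam + 1) = x ^ 2 * (y ^ 2 / lam) ^ lam := by
    have energy_sq : x ^ 2 * (y ^ 2) ^ lam = M ^ 2 * (M ^ 2 * lam) ^ lam := by
      calc
        x ^ 2 * (y ^ 2) ^ lam = (x * y ^ lam) ^ 2 := by rw [mul_pow, pow_right_comm]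
        _ = (M * (M * √lam) ^ lam) ^ 2 := by rw [energy]
        _ = M ^ 2 * (M ^ 2 * lam) ^ lam := by
          rw [mul_pow, pow_right_comm, mul_pow M, Real.sq_sqrt lam.cast_nonneg]
    rw [div_pow, ← mul_div_assoc, energy_sq, eq_div_iff (pow_ne_zero _ hlam_cast)]
    ring
  have hsum : x ^ 2 + lam * (y ^ 2 / lam) ≤ (lam + 1) * M ^ 2 := by
    rw [mul_div_cancel₀ _ hlam_cast]
    linarith [sq_nonneg z]
  obtain ⟨hx, hy⟩ := eq_and_eq_of_pow_le_mul_pow_of_add_le hlam (sq_nonneg x) (by positivity)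
    hprod.le hsum
  exact ⟨hx, by rw [← hy, mul_div_cancel₀ _ hlam_cast]⟩

theorem vectorField_eq_zero_of_energyCasimir_eq_sigma
    (h : energyCasimir lam (x, y, z) = sigma lam M) : vectorField lam (x, y, z) = 0 := by
  obtain ⟨hx, hy, rfl⟩ := sq_eq_of_energyCasimir_eq_sigma h
  simp [vectorField, hx, hy]

theorem eq_of_mul_pow_eq_of_sq_eq (hx : x ^ 2 = M ^ 2)
    (h : x * (M * √lam) ^ lam = M * (M * √lam) ^ lam) : x = M := by
  rcases eq_or_ne M 0 with rfl | hM
  · simpa using hx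
  refine mul_right_cancel₀ ?_ h
  rw [mul_pow]
  refine mul_ne_zero (pow_ne_zero _ hM) ?_
  rcases eq_or_ne lam 0 with rfl | hlam
  · simp
  · positivity

theorem energyCasimir_eq_sigma_iff_eq_or_eq :
    energyCasimir lam (x, y, z) = sigma lam M ↔
      (x, y, z) = (M, M * √lam, 0) ∨ (x, y, z) = ((-1) ^ lam * M, -(M * √lam), 0) := by
  have sign_mul_self : (-1 : ℝ) ^ lam * (-1) ^ lam = 1 := pow_mul_pow_eq_one lam (by norm_num)
  have hsqrt : √(lam : ℝ) ^ 2 = lam := Real.sq_sqrt lam.cast_nonneg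
  simp only [Prod.mk.injEq]
  constructor
  · intro h
    obtain ⟨hx, hy, hz⟩ := sq_eq_of_energyCasimir_eq_sigma h
    obtain ⟨energy, -⟩ := energyCasimir_eq_sigma_iff.mp h
    have hy_sq : y ^ 2 = (M * √lam) ^ 2 := by rw [hy, mul_pow, hsqrt, mul_comm]
    rcases sq_eq_sq_iff_eq_or_eq_neg.mp hy_sq with rfl | rfl
    · exact .inl ⟨eq_of_mul_pow_eq_of_sq_eq hx energy, rfl, hz⟩
    · have signed_eq : (-1) ^ lam * x = M := by
        refine eq_of_mul_pow_eq_of_sq_eq (lam := lam) ?_ ?_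
        · rw [mul_pow, sq ((-1) ^ lam), sign_mul_self, one_mul, hx]
        · rw [← energy, neg_pow (M * √lam)]
          ring
      refine .inr ⟨?_, rfl, hz⟩
      rw [← signed_eq, ← mul_assoc, sign_mul_self, one_mul]
  · rw [energyCasimir_eq_sigma_iff]
    rintro (⟨rfl, rfl, rfl⟩ | ⟨rfl, rfl, rfl⟩)
    · exact ⟨rfl, by linear_combination x ^ 2 * hsqrt⟩
    · constructor
      · rw [neg_pow (M * √lam)]
        linear_combination M * (M * √lam) ^ lam * sign_mul_self
      · linear_combination M ^ 2 * hsqrt + M ^ 2 * sign_mul_self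

end Fiber

end Rattleback

open Rattleback in
theorem rattleback_fiber_over_sigma_s_general (lam : ℕ) (M : ℝ) :
    energyCasimir lam ⁻¹' {sigma lam M} =
        {(M, M * √lam, 0), ((-1) ^ lam * M, -(M * √lam), 0)} ∧
      ∀ v ∈ ({(M, M * √lam, 0), ((-1) ^ lam * M, -(M * √lam), 0)} : Set (ℝ × ℝ × ℝ)),
        vectorField lam v = 0 :=
  ⟨Set.ext fun _ ↦ energyCasimir_eq_sigma_iff_eq_or_eq, fun _ hv ↦
    vectorField_eq_zero_of_energyCasimir_eq_sigma (energyCasimir_eq_sigma_iff_eq_or_eq.mpr hv)⟩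

/-- For `M > 0`, the fiber of the energy–Casimir map `EC(x,y,z) = (x·y^λ, (1/2)(x²+y²+z²))`
over `(M^{λ+1}(√λ)^λ, (λ+1)M²/2)` consists of exactly the two points `(M, M√λ, 0)` and
`((−1)^λ M, −M√λ, 0)`, both of which are equilibria of the rattleback system. -/
theorem rattleback_fiber_over_sigma_s (lam : ℕ) (hlam : 2 ≤ lam) (M : ℝ) (hM : 0 < M) :
    {v : ℝ × ℝ × ℝ | v.1 * v.2.1 ^ lam = M ^ (lam + 1) * (Real.sqrt lam) ^ lam ∧
        (1 / 2 : ℝ) * (v.1 ^ 2 + v.2.1 ^ 2 + v.2.2 ^ 2) = ((lam : ℝ) + 1) * M ^ 2 / 2} =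
      ({(M, M * Real.sqrt lam, 0), ((-1 : ℝ) ^ lam * M, -(M * Real.sqrt lam), 0)} :
        Set (ℝ × ℝ × ℝ)) ∧
    ∀ v ∈ ({(M, M * Real.sqrt lam, 0), ((-1 : ℝ) ^ lam * M, -(M * Real.sqrt lam), 0)} :
        Set (ℝ × ℝ × ℝ)),
      (lam : ℝ) * v.1 * v.2.2 = 0 ∧ v.2.1 * v.2.2 = 0 ∧
        v.2.1 ^ 2 - (lam : ℝ) * v.1 ^ 2 = 0 := by
  simpa only [Rattleback.energyCasimir, Rattleback.vectorField, Rattleback.sigma, Set.preimage,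
    Set.mem_singleton_iff, Prod.mk.injEq, Prod.mk_eq_zero, neg_eq_zero]
    using rattleback_fiber_over_sigma_s_general lam M
end

section
/- Let λ ≥ 2 be a natural number, M ∈ ℝ with M ≠ 0, and k ∈ ℝ. Define y(t) = 2M² / ((M² + 1)·cosh(|M|(t + k)) + (M² − 1)·sinh(|M|(t + k))) and z(t) = |M|·(−1 + M²·cosh(2|M|(t + k)) + M²·sinh(2|M|(t + k))) / (1 + M²·cosh(2|M|(t + k)) + M²·sinh(2|M|(t + k))). Then t ↦ (0, y(t), z(t)) is a solution of the rattleback system, it tends to the unstable equilibrium (0, 0, −|M|) as t → −∞, and it tends to the unstable equilibrium (0, 0, |M|) as t → +∞ (so it is a heteroclinic solution connecting these two equilibria). -/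
/-!
On the invariant plane `x = 0` the rattleback system reads `ẏ = -yz`, `ż = y²`, which is solved by
`y = a sech (at + c)`, `z = a tanh (at + c)`. The curve of the theorem is this orbit with `a = |M|`
and phase `c = |M|k + log |M|`, and its ends are read off from `sech s → 0` and `tanh s → ±1` as
`s → ±∞`.
-/

open Real Filter

open scoped Topology

theorem tendsto_cosh_atTop : Tendsto cosh atTop atTop := by
  refine tendsto_atTop_mono (fun s => ?_) (tendsto_exp_atTop.atTop_div_const two_pos)
  rw [cosh_eq]
  linarith [exp_pos (-s)]

theorem tendsto_cosh_atBot : Tendsto cosh atBot atTop := by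
  simpa only [Function.comp_def, cosh_neg] using tendsto_cosh_atTop.comp tendsto_neg_atBot_atTop

theorem tendsto_tanh_atTop : Tendsto tanh atTop (𝓝 1) := by
  have tanh_eq_one_sub (s : ℝ) : 1 - exp (-s) * (cosh s)⁻¹ = tanh s := by
    rw [← cosh_sub_sinh, tanh_eq_sinh_div_cosh]
    field_simp [(cosh_pos s).ne']
    ring
  have h := (tendsto_exp_neg_atTop_nhds_zero.mul tendsto_cosh_atTop.inv_tendsto_atTop).const_sub 1
  simpa only [Pi.inv_apply, tanh_eq_one_sub, mul_zero, sub_zero] using h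

theorem tendsto_tanh_atBot : Tendsto tanh atBot (𝓝 (-1)) := by
  simpa only [Function.comp_def, tanh_neg, neg_neg] using
    (tendsto_tanh_atTop.comp tendsto_neg_atBot_atTop).neg

theorem hasDerivAt_tanh (s : ℝ) : HasDerivAt tanh (1 / cosh s ^ 2) s := by
  have h := (hasDerivAt_sinh s).fun_div (hasDerivAt_cosh s) (cosh_pos s).ne'
  rw [← sq, ← sq, cosh_sq_sub_sinh_sq] at h
  simpa only [← tanh_eq_sinh_div_cosh] using h

theorem hasDerivAt_inv_cosh (s : ℝ) :
    HasDerivAt (fun s => (cosh s)⁻¹) (-((cosh s)⁻¹ * tanh s)) s := by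
  refine ((hasDerivAt_cosh s).fun_inv (cosh_pos s).ne').congr_deriv ?_
  rw [tanh_eq_sinh_div_cosh]
  ring

theorem two_mul_mul_cosh_add_log {b : ℝ} (hb : 0 < b) (s : ℝ) :
    2 * b * cosh (s + log b) = (b ^ 2 + 1) * cosh s + (b ^ 2 - 1) * sinh s := by
  rw [cosh_add, cosh_log hb, sinh_log hb]
  field_simp

theorem tanh_add_log {b : ℝ} (hb : 0 < b) (s : ℝ) :
    tanh (s + log b) = (b ^ 2 * exp (2 * s) - 1) / (b ^ 2 * exp (2 * s) + 1) := by
  rw [tanh_eq, exp_neg, exp_add, exp_log hb, two_mul, exp_add]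
  field_simp

/-- `t ↦ (x t, y t, z t)` is a global solution of the rattleback system
`ẋ = λxz`, `ẏ = -yz`, `ż = y² - λx²`, for an arbitrary real parameter `λ`. -/
structure IsRattlebackSolution (lam : ℝ) (x y z : ℝ → ℝ) : Prop where
  hasDerivAt_x (t : ℝ) : HasDerivAt x (lam * x t * z t) t
  hasDerivAt_y (t : ℝ) : HasDerivAt y (-(y t * z t)) t
  hasDerivAt_z (t : ℝ) : HasDerivAt z (y t ^ 2 - lam * x t ^ 2) t

theorem isRattlebackSolution_zero_sech_tanh (lam a c : ℝ) :
    IsRattlebackSolution lam (fun _ => 0) (fun t => a * (cosh (a * t + c))⁻¹)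
      (fun t => a * tanh (a * t + c)) := by
  have hphase (t : ℝ) : HasDerivAt (fun t => a * t + c) a t := by
    simpa using ((hasDerivAt_id t).const_mul a).add_const c
  refine ⟨fun t => ?_, fun t => ?_, fun t => ?_⟩
  · simpa only [mul_zero, zero_mul] using hasDerivAt_const t (0 : ℝ)
  · refine (((hasDerivAt_inv_cosh _).comp t (hphase t)).const_mul a).congr_deriv ?_
    ring
  · refine (((hasDerivAt_tanh _).comp t (hphase t)).const_mul a).congr_deriv ?_
    ring

theorem tendsto_zero_sech_tanh_atTop (a : ℝ) :
    Tendsto (fun s => ((0 : ℝ), a * (cosh s)⁻¹, a * tanh s)) atTop (𝓝 (0, 0, a)) := by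
  have hsech := tendsto_cosh_atTop.inv_tendsto_atTop.const_mul a
  have htanh := tendsto_tanh_atTop.const_mul a
  rw [mul_zero] at hsech
  rw [mul_one] at htanh
  exact tendsto_const_nhds.prodMk_nhds (hsech.prodMk_nhds htanh)

theorem tendsto_zero_sech_tanh_atBot (a : ℝ) :
    Tendsto (fun s => ((0 : ℝ), a * (cosh s)⁻¹, a * tanh s)) atBot (𝓝 (0, 0, -a)) := by
  have hsech := tendsto_cosh_atBot.inv_tendsto_atTop.const_mul a
  have htanh := tendsto_tanh_atBot.const_mul a
  rw [mul_zero] at hsech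
  rw [mul_neg_one] at htanh
  exact tendsto_const_nhds.prodMk_nhds (hsech.prodMk_nhds htanh)

theorem rattleback_heteroclinic_y_general (lam M k : ℝ) (hM : M ≠ 0) (y z : ℝ → ℝ)
    (hy : ∀ t : ℝ, y t = 2 * M ^ 2 /
      ((M ^ 2 + 1) * cosh (|M| * (t + k)) + (M ^ 2 - 1) * sinh (|M| * (t + k))))
    (hz : ∀ t : ℝ, z t = |M| *
        (-1 + M ^ 2 * cosh (2 * |M| * (t + k)) + M ^ 2 * sinh (2 * |M| * (t + k))) /
        (1 + M ^ 2 * cosh (2 * |M| * (t + k)) + M ^ 2 * sinh (2 * |M| * (t + k)))) :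
    IsRattlebackSolution lam (fun _ => 0) y z ∧
    Tendsto (fun t => ((0 : ℝ), y t, z t)) atBot (𝓝 (0, 0, -|M|)) ∧
    Tendsto (fun t => ((0 : ℝ), y t, z t)) atTop (𝓝 (0, 0, |M|)) := by
  have ha : 0 < |M| := abs_pos.mpr hM
  have hphase (t : ℝ) : |M| * t + (|M| * k + log |M|) = |M| * (t + k) + log |M| := by ring
  obtain rfl : y = fun t => |M| * (cosh (|M| * t + (|M| * k + log |M|)))⁻¹ := by
    funext t
    rw [hy, hphase, ← sq_abs M, ← two_mul_mul_cosh_add_log ha]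
    field_simp
  obtain rfl : z = fun t => |M| * tanh (|M| * t + (|M| * k + log |M|)) := by
    funext t
    rw [hz, hphase, tanh_add_log ha, sq_abs, ← mul_assoc 2, ← cosh_add_sinh]
    ring
  exact ⟨isRattlebackSolution_zero_sech_tanh lam |M| _,
    (tendsto_zero_sech_tanh_atBot |M|).comp
      (tendsto_atBot_add_const_right _ _ (tendsto_id.const_mul_atBot ha)),
    (tendsto_zero_sech_tanh_atTop |M|).comp
      (tendsto_atTop_add_const_right _ _ (tendsto_id.const_mul_atTop ha))⟩

/-- The explicit curve `t ↦ (0, y(t), z(t))` is a heteroclinic solution of the rattleback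
system `ẋ = λxz, ẏ = −yz, ż = y² − λx²`, connecting the unstable equilibria
`(0, 0, −|M|)` (as `t → −∞`) and `(0, 0, |M|)` (as `t → +∞`). -/
theorem rattleback_heteroclinic_y (lam : ℕ) (hlam : 2 ≤ lam) (M k : ℝ) (hM : M ≠ 0)
    (y z : ℝ → ℝ)
    (hy : ∀ t : ℝ, y t = 2 * M ^ 2 /
      ((M ^ 2 + 1) * Real.cosh (|M| * (t + k)) + (M ^ 2 - 1) * Real.sinh (|M| * (t + k))))
    (hz : ∀ t : ℝ, z t = |M| *
        (-1 + M ^ 2 * Real.cosh (2 * |M| * (t + k)) + M ^ 2 * Real.sinh (2 * |M| * (t + k))) /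
        (1 + M ^ 2 * Real.cosh (2 * |M| * (t + k)) + M ^ 2 * Real.sinh (2 * |M| * (t + k)))) :
    (∀ t : ℝ, HasDerivAt (fun _ : ℝ => (0 : ℝ)) ((lam : ℝ) * 0 * z t) t) ∧
    (∀ t : ℝ, HasDerivAt y (-(y t * z t)) t) ∧
    (∀ t : ℝ, HasDerivAt z ((y t) ^ 2 - (lam : ℝ) * (0 : ℝ) ^ 2) t) ∧
    Tendsto (fun t : ℝ => ((0 : ℝ), y t, z t)) atBot (nhds (0, 0, -|M|)) ∧
    Tendsto (fun t : ℝ => ((0 : ℝ), y t, z t)) atTop (nhds (0, 0, |M|)) := by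
  obtain ⟨⟨hx, hy', hz'⟩, hbot, htop⟩ := rattleback_heteroclinic_y_general lam M k hM y z hy hz
  exact ⟨hx, hy', hz', hbot, htop⟩
end

section
/- Let λ ≥ 2 be a natural number, ε > 0 and h ∈ ℝ. For every solution (x(t), y(t), z(t)) of the perturbed rattleback system ẋ = λxz + ε(xy^λ − h)·y^{λ−1}·y(λx² − y² − z²), ẏ = −yz + ε(xy^λ − h)·y^{λ−1}·x(−λx² + y² − λz²), ż = y² − λx² + ε(xy^λ − h)·y^{λ−1}·(λ+1)xyz, the function t ↦ (x(t)·y(t)^λ − h)² is differentiable with derivative d/dt (x y^λ − h)² = −2ε·y^{2(λ−1)}·(xy^λ − h)²·(λ²x²z² + y²z² + (y² − λx²)²); in particular this derivative is ≤ 0 for all t, so t ↦ (x(t)·y(t)^λ − h)² is nonincreasing. -/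
/-! Write `p = (x, y, z)`, `C = x y^λ` and `w = (y, λx, 0)`, so that `∇C = y^(λ-1) w`. The
rattleback field is `F = w × p`, hence orthogonal to `∇C`, and the perturbing direction is
`G = F × p`, for which `w · G = -|F|²`. Along the perturbed flow `C` therefore obeys the linear
relaxation law `dC/dt = -ε y^(2(λ-1)) |F|² (C - h)` towards `h`, whose rate is nonnegative. -/

theorem hasDerivAt_sub_sq_of_relaxation {𝕜 : Type*} [NontriviallyNormedField 𝕜]
    {f : 𝕜 → 𝕜} {h r t : 𝕜} (hf : HasDerivAt f (-(r * (f t - h))) t) :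
    HasDerivAt (fun s => (f s - h) ^ 2) (-2 * r * (f t - h) ^ 2) t := by
  refine ((hf.sub_const h).fun_pow 2).congr_deriv ?_
  push_cast
  ring

section VectorFields

open scoped Matrix

variable {R : Type*} [CommRing R]

theorem dotProduct_cross_cross_self_right (u v : Fin 3 → R) :
    u ⬝ᵥ ((u ⨯₃ v) ⨯₃ v) = -((u ⨯₃ v) ⬝ᵥ (u ⨯₃ v)) := by
  rw [← cross_anticomm v (u ⨯₃ v), dotProduct_neg, triple_product_permutation,
    triple_product_permutation]

/-- The direction `w = (y, λx, 0)` of the gradient of the Casimir function `x y^λ`, namely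
`∇(x y^λ) = y^(λ-1) w`. -/
def casimirNormal (lam x y : R) : Fin 3 → R :=
  ![y, lam * x, 0]

/-- The vector field of the unperturbed rattleback system, evaluated at `(x, y, z)`. -/
def rattlebackField (lam x y z : R) : Fin 3 → R :=
  ![lam * x * z, -(y * z), y ^ 2 - lam * x ^ 2]

/-- The direction of the perturbation of the rattleback system at `(x, y, z)`, without its scalar
factor `ε (x y^λ - h) y^(λ-1)`. -/
def rattlebackPerturbation (lam x y z : R) : Fin 3 → R :=
  ![y * (lam * x ^ 2 - y ^ 2 - z ^ 2),
    x * (-lam * x ^ 2 + y ^ 2 - lam * z ^ 2),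
    (lam + 1) * x * y * z]

/-- The vector field of the rattleback system perturbed with strength `ε` towards the level `h` of
the Casimir function, evaluated at `(x, y, z)`. -/
def perturbedRattlebackField (lam : ℕ) (ε h x y z : R) : Fin 3 → R :=
  rattlebackField (lam : R) x y z +
    (ε * (x * y ^ lam - h) * y ^ (lam - 1)) • rattlebackPerturbation (lam : R) x y z

/-- The rate `ε y^(2(λ-1)) |F|²`, with `F` the unperturbed field at `(x, y, z)`, at which the
perturbed rattleback system drives its Casimir function towards `h`. -/
def casimirRelaxationRate (lam : ℕ) (ε x y z : R) : R :=
  ε * y ^ (2 * (lam - 1)) *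
    (rattlebackField (lam : R) x y z ⬝ᵥ rattlebackField (lam : R) x y z)

section Identities

variable (lam x y z : R)

theorem casimirNormal_cross_position :
    casimirNormal lam x y ⨯₃ ![x, y, z] = rattlebackField lam x y z := by
  simp only [casimirNormal, rattlebackField, cross_apply, Matrix.cons_val]
  ring_nf

theorem rattlebackField_cross_position :
    rattlebackField lam x y z ⨯₃ ![x, y, z] = rattlebackPerturbation lam x y z := by
  simp only [rattlebackField, rattlebackPerturbation, cross_apply, Matrix.cons_val]
  ring_nf

theorem casimirNormal_dotProduct_rattlebackField :
    casimirNormal lam x y ⬝ᵥ rattlebackField lam x y z = 0 := by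
  rw [← casimirNormal_cross_position, dot_self_cross]

theorem rattlebackField_dotProduct_self :
    rattlebackField lam x y z ⬝ᵥ rattlebackField lam x y z =
      lam ^ 2 * x ^ 2 * z ^ 2 + y ^ 2 * z ^ 2 + (y ^ 2 - lam * x ^ 2) ^ 2 := by
  simp only [rattlebackField, Matrix.vec3_dotProduct']
  ring

theorem casimirNormal_dotProduct_rattlebackPerturbation :
    casimirNormal lam x y ⬝ᵥ rattlebackPerturbation lam x y z =
      -(rattlebackField lam x y z ⬝ᵥ rattlebackField lam x y z) := by
  rw [← rattlebackField_cross_position, ← casimirNormal_cross_position,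
    dotProduct_cross_cross_self_right]

end Identities

theorem casimirRelaxationRate_nonneg (lam : ℕ) {ε : ℝ} (hε : 0 ≤ ε) (x y z : ℝ) :
    0 ≤ casimirRelaxationRate lam ε x y z :=
  mul_nonneg (mul_nonneg hε ((even_two_mul _).pow_nonneg y))
    (dotProduct_self_star_nonneg (rattlebackField (lam : ℝ) x y z))

end VectorFields

section Casimir

open scoped Matrix

variable {𝕜 : Type*} [NontriviallyNormedField 𝕜] {lam : ℕ} {x y : 𝕜 → 𝕜} {t : 𝕜}

theorem hasDerivAt_casimir {v : Fin 3 → 𝕜} (hlam : lam ≠ 0)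
    (hx : HasDerivAt x (v 0) t) (hy : HasDerivAt y (v 1) t) :
    HasDerivAt (fun s => x s * y s ^ lam)
      (y t ^ (lam - 1) * (casimirNormal (lam : 𝕜) (x t) (y t) ⬝ᵥ v)) t := by
  refine (hx.fun_mul (hy.fun_pow lam)).congr_deriv ?_
  rw [casimirNormal, Matrix.vec3_dotProduct, ← mul_pow_sub_one hlam (y t)]
  simp only [Matrix.cons_val]
  ring

theorem hasDerivAt_casimir_of_perturbedRattlebackField {ε h z : 𝕜} (hlam : lam ≠ 0)
    (hx : HasDerivAt x (perturbedRattlebackField lam ε h (x t) (y t) z 0) t)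
    (hy : HasDerivAt y (perturbedRattlebackField lam ε h (x t) (y t) z 1) t) :
    HasDerivAt (fun s => x s * y s ^ lam)
      (-(casimirRelaxationRate lam ε (x t) (y t) z * (x t * y t ^ lam - h))) t := by
  refine (hasDerivAt_casimir hlam hx hy).congr_deriv ?_
  rw [perturbedRattlebackField, dotProduct_add, dotProduct_smul, smul_eq_mul,
    casimirNormal_dotProduct_rattlebackField, casimirNormal_dotProduct_rattlebackPerturbation,
    casimirRelaxationRate]
  ring

end Casimir

theorem rattleback_perturbed_lyapunov_decay_general (lam : ℕ) (hlam : lam ≠ 0)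
    (ε : ℝ) (hε : 0 ≤ ε) (h : ℝ)
    (x y z : ℝ → ℝ)
    (hx : ∀ t : ℝ, HasDerivAt x ((lam : ℝ) * x t * z t +
      ε * (x t * (y t) ^ lam - h) * (y t) ^ (lam - 1) *
        (y t * ((lam : ℝ) * (x t) ^ 2 - (y t) ^ 2 - (z t) ^ 2))) t)
    (hy : ∀ t : ℝ, HasDerivAt y (-(y t * z t) +
      ε * (x t * (y t) ^ lam - h) * (y t) ^ (lam - 1) *
        (x t * (-(lam : ℝ) * (x t) ^ 2 + (y t) ^ 2 - (lam : ℝ) * (z t) ^ 2))) t) :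
    (∀ t : ℝ, HasDerivAt (fun s : ℝ => (x s * (y s) ^ lam - h) ^ 2)
      (-2 * ε * (y t) ^ (2 * (lam - 1)) * (x t * (y t) ^ lam - h) ^ 2 *
        ((lam : ℝ) ^ 2 * (x t) ^ 2 * (z t) ^ 2 + (y t) ^ 2 * (z t) ^ 2 +
          ((y t) ^ 2 - (lam : ℝ) * (x t) ^ 2) ^ 2)) t) ∧
    (∀ t : ℝ,
      -2 * ε * (y t) ^ (2 * (lam - 1)) * (x t * (y t) ^ lam - h) ^ 2 *
        ((lam : ℝ) ^ 2 * (x t) ^ 2 * (z t) ^ 2 + (y t) ^ 2 * (z t) ^ 2 +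
          ((y t) ^ 2 - (lam : ℝ) * (x t) ^ 2) ^ 2) ≤ 0) ∧
    Antitone (fun t : ℝ => (x t * (y t) ^ lam - h) ^ 2) := by
  let C (t : ℝ) : ℝ := x t * (y t) ^ lam
  let rate (t : ℝ) : ℝ := casimirRelaxationRate lam ε (x t) (y t) (z t)
  have relaxation (t : ℝ) : HasDerivAt C (-(rate t * (C t - h))) t :=
    hasDerivAt_casimir_of_perturbedRattlebackField hlam (hx t) (hy t)
  have hasDerivAt_sq (t : ℝ) :
      HasDerivAt (fun s => (C s - h) ^ 2) (-2 * rate t * (C t - h) ^ 2) t :=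
    hasDerivAt_sub_sq_of_relaxation (relaxation t)
  have deriv_nonpos (t : ℝ) : -2 * rate t * (C t - h) ^ 2 ≤ 0 :=
    mul_nonpos_of_nonpos_of_nonneg
      (by linarith [casimirRelaxationRate_nonneg lam hε (x t) (y t) (z t)]) (sq_nonneg _)
  have deriv_eq (t : ℝ) : -2 * rate t * (C t - h) ^ 2 =
      -2 * ε * (y t) ^ (2 * (lam - 1)) * (x t * (y t) ^ lam - h) ^ 2 *
        ((lam : ℝ) ^ 2 * (x t) ^ 2 * (z t) ^ 2 + (y t) ^ 2 * (z t) ^ 2 +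
          ((y t) ^ 2 - (lam : ℝ) * (x t) ^ 2) ^ 2) := by
    simp only [rate, C, casimirRelaxationRate, rattlebackField_dotProduct_self]
    ring
  exact ⟨fun t => (hasDerivAt_sq t).congr_deriv (deriv_eq t),
    fun t => (deriv_eq t).symm.trans_le (deriv_nonpos t),
    antitone_of_hasDerivAt_nonpos hasDerivAt_sq deriv_nonpos⟩

/-- Along any solution of the perturbed rattleback system, the function
`t ↦ (x y^λ − h)²` has derivative
`−2ε y^{2(λ−1)} (xy^λ − h)² (λ²x²z² + y²z² + (y² − λx²)²) ≤ 0`,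
hence is nonincreasing. -/
theorem rattleback_perturbed_lyapunov_decay (lam : ℕ) (hlam : 2 ≤ lam)
    (ε : ℝ) (hε : 0 < ε) (h : ℝ)
    (x y z : ℝ → ℝ)
    (hx : ∀ t : ℝ, HasDerivAt x ((lam : ℝ) * x t * z t +
      ε * (x t * (y t) ^ lam - h) * (y t) ^ (lam - 1) *
        (y t * ((lam : ℝ) * (x t) ^ 2 - (y t) ^ 2 - (z t) ^ 2))) t)
    (hy : ∀ t : ℝ, HasDerivAt y (-(y t * z t) +
      ε * (x t * (y t) ^ lam - h) * (y t) ^ (lam - 1) *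
        (x t * (-(lam : ℝ) * (x t) ^ 2 + (y t) ^ 2 - (lam : ℝ) * (z t) ^ 2))) t)
    (hz : ∀ t : ℝ, HasDerivAt z ((y t) ^ 2 - (lam : ℝ) * (x t) ^ 2 +
      ε * (x t * (y t) ^ lam - h) * (y t) ^ (lam - 1) *
        (((lam : ℝ) + 1) * x t * y t * z t)) t) :
    (∀ t : ℝ, HasDerivAt (fun s : ℝ => (x s * (y s) ^ lam - h) ^ 2)
      (-2 * ε * (y t) ^ (2 * (lam - 1)) * (x t * (y t) ^ lam - h) ^ 2 *
        ((lam : ℝ) ^ 2 * (x t) ^ 2 * (z t) ^ 2 + (y t) ^ 2 * (z t) ^ 2 +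
          ((y t) ^ 2 - (lam : ℝ) * (x t) ^ 2) ^ 2)) t) ∧
    (∀ t : ℝ,
      -2 * ε * (y t) ^ (2 * (lam - 1)) * (x t * (y t) ^ lam - h) ^ 2 *
        ((lam : ℝ) ^ 2 * (x t) ^ 2 * (z t) ^ 2 + (y t) ^ 2 * (z t) ^ 2 +
          ((y t) ^ 2 - (lam : ℝ) * (x t) ^ 2) ^ 2) ≤ 0) ∧
    Antitone (fun t : ℝ => (x t * (y t) ^ lam - h) ^ 2) :=
  rattleback_perturbed_lyapunov_decay_general lam (by lia) ε hε.le h x y z hx hy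
end
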